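/- arXiv:2402.18290 — 4 statements merged into one kernel-verified Lean document; each statement's English description precedes it below -/
import Mathlib

section
/- For h = 4 there exists a group isomorphism u : ℤ/4 ⊕ ℤ/4 ⊕ ℤ/2 ⊕ ℤ/2 → ℤ⁴/A₄ℤ⁴ such that for all a, b with integer lifts x = (x₁,x₂,x₃,x₄) and y = (y₁,y₂,y₃,y₄): ∂λ(u(a),u(b)) = x₁y₁/2 + x₂y₂/2 + (x₁y₂ + x₂y₁)/4 + (x₁y₄ + x₄y₁)/2 + (x₃y₄ + x₄y₃)/2 mod ℤ and ∂θ(u(a)) = x₁²/4 + x₂²/4 + x₁x₂/4 + (x₃² + x₄² + x₄x₁ + x₄x₃)/2 mod ℤ. -/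
open Matrix

noncomputable section

/-- The matrix `Q_h`: first row all `4`; in rows `2,…,h` diagonal and
above-diagonal entries are `2`, below-diagonal entries are `0`. -/
def Qmat (h : ℕ) : Matrix (Fin h) (Fin h) ℤ :=
  Matrix.of fun i j => if (i : ℕ) = 0 then 4 else if i ≤ j then 2 else 0

/-- `A_h = Q_h + Q_hᵀ`. -/
def Amat (h : ℕ) : Matrix (Fin h) (Fin h) ℤ := Qmat h + (Qmat h)ᵀ

/-- `A_h` viewed as a rational matrix. -/
def AmatQ (h : ℕ) : Matrix (Fin h) (Fin h) ℚ := (Amat h).map (Int.cast)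

/-- `Q_h` viewed as a rational matrix. -/
def QmatQ (h : ℕ) : Matrix (Fin h) (Fin h) ℚ := (Qmat h).map (Int.cast)

/-- The cokernel `ℤ^h / A_h ℤ^h`. -/
abbrev Coker (h : ℕ) := (Fin h → ℤ) ⧸ LinearMap.range ((Amat h).mulVecLin)

/-- The quotient map `ℤ^h → ℤ^h / A_h ℤ^h`. -/
def ckMk {h : ℕ} (x : Fin h → ℤ) : Coker h := Submodule.Quotient.mk x

def ratVec {h : ℕ} (x : Fin h → ℤ) : Fin h → ℚ := fun i => (x i : ℚ)

/-- The boundary linking form `∂λ` computed on representatives: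
`x ᵀ A_h⁻¹ y mod ℤ`, valued in `ℚ/ℤ`. -/
def linkR (h : ℕ) (x y : Fin h → ℤ) : AddCircle (1 : ℚ) :=
  ((ratVec x ⬝ᵥ ((AmatQ h)⁻¹ *ᵥ ratVec y) : ℚ) : AddCircle (1 : ℚ))

/-- The boundary quadratic form `∂θ` computed on representatives:
`xᵀ A_h⁻¹ Q_h A_h⁻¹ x mod ℤ`, valued in `ℚ/ℤ`. -/
def quadR (h : ℕ) (x : Fin h → ℤ) : AddCircle (1 : ℚ) :=
  ((ratVec x ⬝ᵥ (((AmatQ h)⁻¹ * QmatQ h * (AmatQ h)⁻¹) *ᵥ ratVec x) : ℚ) : AddCircle (1 : ℚ))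
/-- The explicit rational inverse of `A_4`. -/
def AinvExplicit : Matrix (Fin 4) (Fin 4) ℚ :=
  !![1/2, -1/4, -1/4, -1/4; -1/4, 1/2, 0, 0; -1/4, 0, 1/2, 0; -1/4, 0, 0, 1/2]

lemma Qmat_four : Qmat 4 = !![4,4,4,4; 0,2,2,2; 0,0,2,2; 0,0,0,2] := by
  ext i j
  fin_cases i <;> fin_cases j <;> simp [Qmat]

lemma Amat_four : Amat 4 = !![8,4,4,4; 4,4,2,2; 4,2,4,2; 4,2,2,4] := by
  rw [Amat, Qmat_four]
  ext i j
  fin_cases i <;> fin_cases j <;> simp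

lemma AmatQ_inv : (AmatQ 4)⁻¹ = AinvExplicit := by
  apply Matrix.inv_eq_right_inv
  rw [AmatQ, Amat_four, AinvExplicit]
  ext i j
  fin_cases i <;> fin_cases j <;> simp [Matrix.mul_apply, Fin.sum_univ_four] <;> norm_num

lemma link_formula (w z : Fin 4 → ℤ) : ratVec w ⬝ᵥ ((AmatQ 4)⁻¹ *ᵥ ratVec z) =
    ((w 0 : ℚ) * z 0 + w 1 * z 1 + w 2 * z 2 + w 3 * z 3) / 2
    - ((w 0 : ℚ) * (z 1 + z 2 + z 3) + (w 1 + w 2 + w 3) * z 0) / 4 := by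
  rw [AmatQ_inv]
  simp [AinvExplicit, dotProduct, mulVec, Fin.sum_univ_four, ratVec]
  ring

lemma quad_matrix : (AmatQ 4)⁻¹ * QmatQ 4 * (AmatQ 4)⁻¹ =
    !![1/4, 1/4, 0, -1/4; -1/2, 1/4, 1/4, 1/4; -1/4, -1/4, 1/4, 1/4; 0, -1/4, -1/4, 1/4] := by
  rw [AmatQ_inv, QmatQ, Qmat_four, AinvExplicit]
  ext i j
  fin_cases i <;> fin_cases j <;> simp [Matrix.mul_apply, Matrix.vecMul, dotProduct, Fin.sum_univ_four] <;> norm_num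

lemma quad_formula (w : Fin 4 → ℤ) :
    ratVec w ⬝ᵥ (((AmatQ 4)⁻¹ * QmatQ 4 * (AmatQ 4)⁻¹) *ᵥ ratVec w) =
    ((w 0 : ℚ) ^ 2 + w 1 ^ 2 + w 2 ^ 2 + w 3 ^ 2 - w 0 * w 1 - w 0 * w 2 - w 0 * w 3) / 4 := by
  rw [quad_matrix]
  simp [dotProduct, mulVec, Fin.sum_univ_four, ratVec]
  ring

/-- The coordinate map `ℤ⁴ → ℤ/4 ⊕ ℤ/4 ⊕ ℤ/2 ⊕ ℤ/2`. -/
def coordMap : (Fin 4 → ℤ) →ₗ[ℤ] (ZMod 4 × ZMod 4 × ZMod 2 × ZMod 2) :=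
  AddMonoidHom.toIntLinearMap
    { toFun := fun w => (((-w 1 - w 2 - w 3 : ℤ) : ZMod 4), ((w 0 : ℤ) : ZMod 4),
        ((-w 2 : ℤ) : ZMod 2), ((w 2 + w 3 : ℤ) : ZMod 2))
      map_zero' := by simp
      map_add' := by
        intro a b
        simp only [Prod.mk_add_mk, ← Int.cast_add, Pi.add_apply]
        refine Prod.ext ?_ (Prod.ext ?_ (Prod.ext ?_ ?_)) <;> simp <;> ring }

lemma coordMap_apply (w : Fin 4 → ℤ) : coordMap w =
    (((-w 1 - w 2 - w 3 : ℤ) : ZMod 4), ((w 0 : ℤ) : ZMod 4),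
        ((-w 2 : ℤ) : ZMod 2), ((w 2 + w 3 : ℤ) : ZMod 2)) := rfl

lemma coordMap_eq_iff (w x : Fin 4 → ℤ) :
    coordMap w = ((x 0 : ZMod 4), (x 1 : ZMod 4), (x 2 : ZMod 2), (x 3 : ZMod 2)) ↔
    (∃ k, x 0 = -w 1 - w 2 - w 3 + 4 * k) ∧ (∃ k, x 1 = w 0 + 4 * k) ∧
    (∃ k, x 2 = -w 2 + 2 * k) ∧ (∃ k, x 3 = w 2 + w 3 + 2 * k) := by
  have key : ∀ (n : ℕ) (a b : ℤ), (a : ZMod n) = (b : ZMod n) ↔ ∃ k, b = a + n * k := by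
    intro n a b
    rw [ZMod.intCast_eq_intCast_iff_dvd_sub]
    constructor
    · rintro ⟨k, hk⟩
      exact ⟨k, by linarith⟩
    · rintro ⟨k, hk⟩
      exact ⟨k, by linarith⟩
  rw [coordMap_apply]
  simp only [Prod.mk.injEq]
  rw [key 4, key 4, key 2, key 2]
  norm_num

lemma coordMap_surjective : Function.Surjective coordMap := by
  rintro ⟨a, b, c, d⟩
  obtain ⟨a, rfl⟩ := ZMod.intCast_surjective a
  obtain ⟨b, rfl⟩ := ZMod.intCast_surjective b
  obtain ⟨c, rfl⟩ := ZMod.intCast_surjective c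
  obtain ⟨d, rfl⟩ := ZMod.intCast_surjective d
  refine ⟨![b, -a - d, -c, c + d], ?_⟩
  refine (coordMap_eq_iff _ ![a, b, c, d]).2 ⟨⟨0, ?_⟩, ⟨0, ?_⟩, ⟨0, ?_⟩, ⟨0, ?_⟩⟩ <;> simp <;> ring

lemma range_eq_ker : LinearMap.range ((Amat 4).mulVecLin) = LinearMap.ker coordMap := by
  ext w
  have h0 : w ∈ LinearMap.ker coordMap ↔
      coordMap w = (((0 : Fin 4 → ℤ) 0 : ZMod 4), ((0 : Fin 4 → ℤ) 1 : ZMod 4),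
        ((0 : Fin 4 → ℤ) 2 : ZMod 2), ((0 : Fin 4 → ℤ) 3 : ZMod 2)) := by
    rw [LinearMap.mem_ker]
    simp
    rfl
  rw [h0, coordMap_eq_iff, LinearMap.mem_range, Amat_four]
  simp only [Pi.zero_apply]
  constructor
  · rintro ⟨v, rfl⟩
    simp only [Matrix.mulVecLin_apply, mulVec, dotProduct, Fin.sum_univ_four]
    simp
    refine ⟨⟨3 * v 0 + 2 * v 1 + 2 * v 2 + 2 * v 3, ?_⟩,
      ⟨-(2 * v 0 + v 1 + v 2 + v 3), ?_⟩, ⟨2 * v 0 + v 1 + 2 * v 2 + v 3, ?_⟩,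
      ⟨-(4 * v 0 + 2 * v 1 + 3 * v 2 + 3 * v 3), ?_⟩⟩ <;> ring
  · rintro ⟨⟨a, ha⟩, ⟨b, hb⟩, ⟨c, hc⟩, ⟨d, hd⟩⟩
    have e0 : w 0 = -4 * b := by linarith
    have e2 : w 2 = 2 * c := by linarith
    have e3 : w 3 = -2 * d - 2 * c := by linarith
    have e1 : w 1 = 4 * a + 2 * d := by linarith
    refine ⟨![-2 * b - a, 2 * a + b + d, b + c, b - c - d], ?_⟩
    ext i
    fin_cases i <;> simp [mulVec, dotProduct, Fin.sum_univ_four, e0, e1, e2, e3] <;> ring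

/-- The isomorphism of the theorem. -/
def uIso : (ZMod 4 × ZMod 4 × ZMod 2 × ZMod 2) ≃+ Coker 4 :=
  ((Submodule.quotEquivOfEq _ _ range_eq_ker).trans
    (coordMap.quotKerEquivOfSurjective coordMap_surjective)).toAddEquiv.symm

lemma coordMap_of_eq (w : Fin 4 → ℤ) (p) (h : ckMk w = uIso p) : coordMap w = p := by
  have := congrArg uIso.symm h
  rw [AddEquiv.symm_apply_apply] at this
  rw [← this]
  rfl

lemma circle_eq (a b : ℚ) (n : ℤ) (h : b = a + n) : (a : AddCircle (1 : ℚ)) = b := by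
  rw [h, AddCircle.coe_add]
  have : ((n : ℚ) : AddCircle (1 : ℚ)) = 0 := (AddCircle.coe_eq_zero_iff 1).2 ⟨n, by simp⟩
  rw [this, add_zero]

/-- For h = 4 there is a group isomorphism u : ℤ/4 ⊕ ℤ/4 ⊕ ℤ/2 ⊕ ℤ/2 → ℤ⁴/A₄ℤ⁴ identifying
the boundary linking form with x₁y₁/2 + x₂y₂/2 + (x₁y₂+x₂y₁)/4 + (x₁y₄+x₄y₁)/2 + (x₃y₄+x₄y₃)/2
mod ℤ and the boundary quadratic form with x₁²/4 + x₂²/4 + x₁x₂/4 + (x₃²+x₄²+x₄x₁+x₄x₃)/2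
mod ℤ, computed from integer lifts x, y of the arguments. -/
theorem boundary_forms_h4 :
    ∃ u : (ZMod 4 × ZMod 4 × ZMod 2 × ZMod 2) ≃+ Coker 4,
      ∀ x y x' y' : Fin 4 → ℤ,
        ckMk x' = u ((x 0 : ZMod 4), (x 1 : ZMod 4), (x 2 : ZMod 2), (x 3 : ZMod 2)) →
        ckMk y' = u ((y 0 : ZMod 4), (y 1 : ZMod 4), (y 2 : ZMod 2), (y 3 : ZMod 2)) →
        linkR 4 x' y' =
          (((x 0 : ℚ) * (y 0 : ℚ) / 2 + (x 1 : ℚ) * (y 1 : ℚ) / 2 +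
            ((x 0 : ℚ) * (y 1 : ℚ) + (x 1 : ℚ) * (y 0 : ℚ)) / 4 +
            ((x 0 : ℚ) * (y 3 : ℚ) + (x 3 : ℚ) * (y 0 : ℚ)) / 2 +
            ((x 2 : ℚ) * (y 3 : ℚ) + (x 3 : ℚ) * (y 2 : ℚ)) / 2 : ℚ) : AddCircle (1 : ℚ)) ∧
        quadR 4 x' =
          (((x 0 : ℚ) ^ 2 / 4 + (x 1 : ℚ) ^ 2 / 4 + (x 0 : ℚ) * (x 1 : ℚ) / 4 +
            ((x 2 : ℚ) ^ 2 + (x 3 : ℚ) ^ 2 + (x 3 : ℚ) * (x 0 : ℚ) + (x 3 : ℚ) * (x 2 : ℚ)) / 2 :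
              ℚ) : AddCircle (1 : ℚ)) := by
  refine ⟨uIso, ?_⟩
  intro x y w z hx hy
  obtain ⟨⟨k0, h0⟩, ⟨k1, h1⟩, ⟨k2, h2⟩, ⟨k3, h3⟩⟩ :=
    (coordMap_eq_iff w x).1 (coordMap_of_eq _ _ hx)
  obtain ⟨⟨l0, g0⟩, ⟨l1, g1⟩, ⟨l2, g2⟩, ⟨l3, g3⟩⟩ :=
    (coordMap_eq_iff z y).1 (coordMap_of_eq _ _ hy)
  constructor
  · rw [linkR, link_formula]
    refine circle_eq _ _ (((-2) * w 2 * z 2 + (-1) * w 2 * z 3 + (-1) * w 3 * z 2 + (-1) * w 3 * z 3)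
      + (2 * k0 * y 0 + 2 * k1 * y 1 + k0 * y 1 + k1 * y 0 + 2 * k0 * y 3 + k3 * y 0
        + k2 * y 3 + k3 * y 2)
      + (2 * l0 * (-w 1 - w 2 - w 3) + 2 * l1 * w 0 + l0 * w 0 + l1 * (-w 1 - w 2 - w 3) + 2 * l0 * (w 2 + w 3) + l3 * (-w 1 - w 2 - w 3)
        + l2 * (w 2 + w 3) + l3 * (-w 2))) ?_
    rw [h0, h1, h2, h3, g0, g1, g2, g3]
    push_cast
    ring
  · rw [quadR, quad_formula]
    refine circle_eq _ _ ((2 * k0 * (-w 1 - w 2 - w 3) + 4 * k0 ^ 2 + 2 * k1 * w 0 + 4 * k1 ^ 2 + k0 * w 0 + k1 * (-w 1 - w 2 - w 3) + 4 * k0 * k1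
        + 2 * k2 * (-w 2) + 2 * k2 ^ 2 + 2 * k3 * (w 2 + w 3) + 2 * k3 ^ 2
        + k3 * (-w 1 - w 2 - w 3) + 2 * k0 * (w 2 + w 3) + 4 * k0 * k3
        + k3 * (-w 2) + k2 * (w 2 + w 3) + 2 * k2 * k3)) ?_
    rw [h0, h1, h2, h3]
    push_cast
    ring
end
end

section
/- For h = 3, the group {P ∈ GL₃(ℤ) : P^T A₃ P = A₃} of isometries of the symmetric bilinear form represented by A₃ = Q₃ + Q₃^T is finite of order 48. -/
open Matrix

noncomputable section

/-- Candidate columns. -/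
def isoS1 : Finset (ℤ × ℤ × ℤ) :=
  (Finset.Icc (-1) 1 ×ˢ (Finset.Icc (-2) 2 ×ˢ Finset.Icc (-2) 2)).filter fun v =>
    (2 * v.1 + v.2.1 + v.2.2) ^ 2 + v.2.1 ^ 2 + v.2.2 ^ 2 = 4

def isoS2 : Finset (ℤ × ℤ × ℤ) :=
  (Finset.Icc (-1) 1 ×ˢ (Finset.Icc (-2) 2 ×ˢ Finset.Icc (-2) 2)).filter fun v =>
    (2 * v.1 + v.2.1 + v.2.2) ^ 2 + v.2.1 ^ 2 + v.2.2 ^ 2 = 2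

/-- Half of the bilinear form of `A_3`. -/
def isoB (u v : ℤ × ℤ × ℤ) : ℤ :=
  (2 * u.1 + u.2.1 + u.2.2) * (2 * v.1 + v.2.1 + v.2.2) + u.2.1 * v.2.1 + u.2.2 * v.2.2

def isoT : Finset ((ℤ × ℤ × ℤ) × (ℤ × ℤ × ℤ) × (ℤ × ℤ × ℤ)) :=
  (isoS1 ×ˢ (isoS2 ×ˢ isoS2)).filter fun t =>
    isoB t.1 t.2.1 = 2 ∧ isoB t.1 t.2.2 = 2 ∧ isoB t.2.1 t.2.2 = 1

theorem isoT_card : isoT.card = 48 := by decide +kernel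

def isoM (t : (ℤ × ℤ × ℤ) × (ℤ × ℤ × ℤ) × (ℤ × ℤ × ℤ)) : Matrix (Fin 3) (Fin 3) ℤ :=
  !![t.1.1, t.2.1.1, t.2.2.1; t.1.2.1, t.2.1.2.1, t.2.2.2.1; t.1.2.2, t.2.1.2.2, t.2.2.2.2]

theorem isoM_inj : Function.Injective isoM := by
  rintro ⟨⟨a, b, c⟩, ⟨d, e, f⟩, ⟨g, h, i⟩⟩ ⟨⟨a2, b2, c2⟩, ⟨d2, e2, f2⟩, ⟨g2, h2, i2⟩⟩ H
  have := fun i j => congrFun (congrFun H i) j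
  simp [isoM, Fin.forall_fin_succ] at this
  simp only [Prod.mk.injEq]
  tauto

theorem isoA : Amat 3 = !![8, 4, 4; 4, 4, 2; 4, 2, 4] := by
  ext i j
  fin_cases i <;> fin_cases j <;> simp [Amat, Qmat]

theorem iso_bound (x y z : ℤ) (h : (2 * x + y + z) ^ 2 + y ^ 2 + z ^ 2 ≤ 4) :
    (-1 ≤ x ∧ x ≤ 1) ∧ (-2 ≤ y ∧ y ≤ 2) ∧ (-2 ≤ z ∧ z ≤ 2) := by
  have h1 := sq_nonneg (2 * x + y + z)
  have h2 := sq_nonneg y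
  have h3 := sq_nonneg z
  refine ⟨⟨?_, ?_⟩, ⟨?_, ?_⟩, ⟨?_, ?_⟩⟩ 
  · nlinarith [sq_nonneg (2 * x + y + z + y), sq_nonneg (2 * x + y + z+z), sq_nonneg (y-z)]
  · nlinarith [sq_nonneg (2 * x + y + z + y), sq_nonneg (2 * x + y + z+z), sq_nonneg (y-z)]
  all_goals nlinarith

theorem isoM_gram (t) : (isoM t)ᵀ * Amat 3 * isoM t = Amat 3 ↔ t ∈ isoT := by
  obtain ⟨⟨a, b, c⟩, ⟨d, e, f⟩, ⟨g, h, i⟩⟩ := t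
  rw [isoA, ← Matrix.ext_iff]
  simp only [isoT, isoS1, isoS2, Finset.mem_filter, Finset.mem_product, Finset.mem_Icc]
  simp [isoB, isoM, Fin.forall_fin_succ, Matrix.mul_apply, Fin.sum_univ_succ]
  constructor
  · rintro ⟨⟨h1, h2, h3⟩, ⟨h4, h5, h6⟩, h7, h8, h9⟩
    have k1 : (2 * a + b + c) ^ 2 + b ^ 2 + c ^ 2 = 4 := by linarith
    have k2 : (2 * d + e + f) ^ 2 + e ^ 2 + f ^ 2 = 2 := by linarith
    have k3 : (2 * g + h + i) ^ 2 + h ^ 2 + i ^ 2 = 2 := by linarith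
    exact ⟨⟨⟨iso_bound _ _ _ k1.le, k1⟩, ⟨iso_bound _ _ _ (by linarith), k2⟩,
      ⟨iso_bound _ _ _ (by linarith), k3⟩⟩, by linarith, by linarith, by linarith⟩
  · rintro ⟨⟨⟨-, k1⟩, ⟨-, k2⟩, ⟨-, k3⟩⟩, k4, k5, k6⟩
    refine ⟨⟨?_, ?_, ?_⟩, ⟨?_, ?_, ?_⟩, ?_, ?_, ?_⟩ <;> linarith

theorem iso_det (P : Matrix (Fin 3) (Fin 3) ℤ) (h : Pᵀ * Amat 3 * P = Amat 3) :
    IsUnit P.det := by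
  have h1 := congrArg Matrix.det h
  have h2 : (Amat 3).det = 32 := by rw [isoA, Matrix.det_fin_three]; simp
  rw [Matrix.det_mul, Matrix.det_mul, Matrix.det_transpose, h2] at h1
  exact IsUnit.of_mul_eq_one P.det (by linarith)

/-- For h = 3, the group of isometries of the symmetric bilinear form represented by
A_3 = Q_3 + Q_3ᵀ, i.e. {P ∈ GL_3(ℤ) : Pᵀ A_3 P = A_3}, is finite of order 48. -/
theorem isometry_group_order_h3 :
    Nat.card {P : Matrix (Fin 3) (Fin 3) ℤ // IsUnit P.det ∧ Pᵀ * Amat 3 * P = Amat 3} =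
      48 := by
  have key : {P : Matrix (Fin 3) (Fin 3) ℤ | IsUnit P.det ∧ Pᵀ * Amat 3 * P = Amat 3} =
      Set.image isoM (isoT : Set _) := by
    ext P
    constructor
    · rintro ⟨-, h⟩
      have e : isoM ((P 0 0, P 1 0, P 2 0), (P 0 1, P 1 1, P 2 1), (P 0 2, P 1 2, P 2 2)) = P := by
        ext i j
        fin_cases i <;> fin_cases j <;> rfl
      refine ⟨_, ?_, e⟩
      rw [Finset.mem_coe, ← isoM_gram, e]
      exact h
    · rintro ⟨t, ht, rfl⟩
      have := (isoM_gram t).2 ht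
      exact ⟨iso_det _ this, this⟩
  change Nat.card ({P : Matrix (Fin 3) (Fin 3) ℤ |
    IsUnit P.det ∧ Pᵀ * Amat 3 * P = Amat 3} : Set _) = 48
  rw [Nat.card_coe_set_eq, key, Set.ncard_image_of_injective _ isoM_inj, Set.ncard_coe_finset,
    isoT_card]
end
end

section
/- For h = 2, the boundary map ∂ is surjective onto the automorphisms of the boundary forms: for every group automorphism φ of ℤ²/A₂ℤ² satisfying ∂λ(φ(ξ),φ(η)) = ∂λ(ξ,η) and ∂θ(φ(ξ)) = ∂θ(ξ) for all ξ, η, there exists P ∈ GL₂(ℤ) with P^T A₂ P = A₂ such that φ([x]) = [(P^T)^{-1} x] for all x ∈ ℤ². Equivalently, the boundary automorphism set bAut(ℤ², [Q₂]) is trivial. -/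
open Matrix

noncomputable section

theorem aux_Amat : Amat 2 = !![8, 4; 4, 4] := by
  ext i j
  fin_cases i <;> fin_cases j <;> simp [Amat, Qmat]

theorem aux_inv : (AmatQ 2)⁻¹ = !![1/4, -1/4; -1/4, 1/2] := by
  apply Matrix.inv_eq_left_inv
  rw [AmatQ, aux_Amat]
  ext i j
  fin_cases i <;> fin_cases j <;> simp [Matrix.mul_apply, Fin.sum_univ_two] <;> norm_num

theorem aux_Q : QmatQ 2 = !![4, 4; 0, 2] := by
  ext i j
  fin_cases i <;> fin_cases j <;> simp [QmatQ, Qmat]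

theorem aux_circle (a b : ℚ) (h : (a : AddCircle (1 : ℚ)) = (b : AddCircle (1 : ℚ))) :
    ∃ n : ℤ, a = b + n := by
  have h2 := (QuotientAddGroup.eq (s := AddSubgroup.zmultiples (1 : ℚ))).1 h
  obtain ⟨n, hn⟩ := AddSubgroup.mem_zmultiples_iff.1 h2
  refine ⟨-n, ?_⟩
  simp at hn
  push_cast
  linarith

theorem aux_link (x y x' y' : Fin 2 → ℤ) (h : linkR 2 x' y' = linkR 2 x y) :
    ∃ n : ℤ, (x' 0 - x' 1) * (y' 0 - y' 1) + x' 1 * y' 1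
      = (x 0 - x 1) * (y 0 - y 1) + x 1 * y 1 + 4 * n := by
  obtain ⟨n, hn⟩ := aux_circle _ _ h
  refine ⟨n, ?_⟩
  rw [aux_inv] at hn
  simp [dotProduct, Matrix.mulVec, Fin.sum_univ_two, ratVec] at hn
  qify
  linarith

theorem aux_quad (x x' : Fin 2 → ℤ) (h : quadR 2 x' = quadR 2 x) :
    ∃ n : ℤ, (x' 0 - x' 1) ^ 2 + x' 1 ^ 2
      = (x 0 - x 1) ^ 2 + x 1 ^ 2 + 8 * n := by
  obtain ⟨n, hn⟩ := aux_circle _ _ h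
  refine ⟨n, ?_⟩
  rw [aux_inv, aux_Q] at hn
  simp [dotProduct, Matrix.mulVec, Fin.sum_univ_two, ratVec, Matrix.mul_apply] at hn
  qify
  linarith

theorem aux_mk (x y : Fin 2 → ℤ) (h0 : (4 : ℤ) ∣ x 0 - y 0) (h1 : (4 : ℤ) ∣ x 1 - y 1) :
    (ckMk x : Coker 2) = ckMk y := by
  obtain ⟨a, ha⟩ := h0
  obtain ⟨b, hb⟩ := h1
  refine (Submodule.Quotient.eq _).2 ⟨![a - b, 2 * b - a], ?_⟩
  rw [aux_Amat]
  ext i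
  fin_cases i
  · simp [Matrix.mulVec, dotProduct, Fin.sum_univ_two]; linarith
  · simp [Matrix.mulVec, dotProduct, Fin.sum_univ_two]; linarith

theorem aux_red (u v n : ℤ) (h : u ^ 2 + v ^ 2 = 1 + 8 * n) :
    ((4 : ℤ) ∣ u - 1 ∧ (4 : ℤ) ∣ v) ∨ ((4 : ℤ) ∣ u + 1 ∧ (4 : ℤ) ∣ v) ∨
    ((4 : ℤ) ∣ u ∧ (4 : ℤ) ∣ v - 1) ∨ ((4 : ℤ) ∣ u ∧ (4 : ℤ) ∣ v + 1) := by
  obtain ⟨a, i, hu, hi⟩ : ∃ a i : ℤ, u = 4 * a + i ∧ (i = 0 ∨ i = 1 ∨ i = 2 ∨ i = 3) :=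
    ⟨u / 4, u % 4, by omega, by omega⟩
  obtain ⟨b, j, hv, hj⟩ : ∃ b j : ℤ, v = 4 * b + j ∧ (j = 0 ∨ j = 1 ∨ j = 2 ∨ j = 3) :=
    ⟨v / 4, v % 4, by omega, by omega⟩
  subst hu hv
  rcases hi with rfl | rfl | rfl | rfl <;> rcases hj with rfl | rfl | rfl | rfl <;>
    ring_nf at h <;> omega

/-- A vector whose boundary quadratic value is that of a unit vector is congruent to one
of four explicit unit vectors. -/
theorem aux_rep (z : Fin 2 → ℤ) (n : ℤ) (h : (z 0 - z 1) ^ 2 + z 1 ^ 2 = 1 + 8 * n) :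
    ∃ w : Fin 2 → ℤ, (ckMk z : Coker 2) = ckMk w ∧
      (w = ![1, 0] ∨ w = ![-1, 0] ∨ w = ![1, 1] ∨ w = ![-1, -1]) := by
  rcases aux_red _ _ n h with ⟨h0, h1⟩ | ⟨h0, h1⟩ | ⟨h0, h1⟩ | ⟨h0, h1⟩
  · exact ⟨![1, 0], aux_mk _ _ (by simp; omega) (by simp; omega), by simp⟩
  · exact ⟨![-1, 0], aux_mk _ _ (by simp; omega) (by simp; omega), by simp⟩
  · exact ⟨![1, 1], aux_mk _ _ (by simp; omega) (by simp; omega), by simp⟩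
  · exact ⟨![-1, -1], aux_mk _ _ (by simp; omega) (by simp; omega), by simp⟩

theorem aux_phi (φ : Coker 2 ≃+ Coker 2) (w t : Fin 2 → ℤ)
    (hw : φ (ckMk ![1, 0]) = ckMk w) (ht : φ (ckMk ![1, 1]) = ckMk t) (x : Fin 2 → ℤ) :
    φ (ckMk x) = ckMk (!![w 0, t 0 - w 0; w 1, t 1 - w 1] *ᵥ x) := by
  have e1 : (ckMk x : Coker 2)
      = (x 0 - x 1) • (ckMk ![1, 0] : Coker 2) + x 1 • (ckMk ![1, 1] : Coker 2) := by
    simp only [ckMk, ← Submodule.Quotient.mk_smul, ← Submodule.Quotient.mk_add]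
    congr 1
    ext i
    fin_cases i <;> simp
  have e2 : (ckMk (!![w 0, t 0 - w 0; w 1, t 1 - w 1] *ᵥ x) : Coker 2)
      = (x 0 - x 1) • (ckMk w : Coker 2) + x 1 • (ckMk t : Coker 2) := by
    simp only [ckMk, ← Submodule.Quotient.mk_smul, ← Submodule.Quotient.mk_add]
    congr 1
    ext i
    fin_cases i <;> simp [Matrix.mulVec, dotProduct, Fin.sum_univ_two] <;> ring
  rw [e1, e2, map_add, map_zsmul, map_zsmul, hw, ht]

theorem aux_fin (φ : Coker 2 ≃+ Coker 2) (w t : Fin 2 → ℤ)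
    (hw : φ (ckMk ![1, 0]) = ckMk w) (ht : φ (ckMk ![1, 1]) = ckMk t)
    (P : Matrix (Fin 2) (Fin 2) ℤ)
    (hP : !![w 0, t 0 - w 0; w 1, t 1 - w 1] * Pᵀ = 1)
    (hA : Pᵀ * !![8, 4; 4, 4] * P = !![8, 4; 4, 4]) :
    ∃ P : Matrix (Fin 2) (Fin 2) ℤ, IsUnit P.det ∧ Pᵀ * Amat 2 * P = Amat 2 ∧
      ∀ x : Fin 2 → ℤ, φ (ckMk x) = ckMk ((Pᵀ)⁻¹ *ᵥ x) := by
  refine ⟨P, ?_, by rw [aux_Amat, hA], fun x => ?_⟩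
  · rw [← Matrix.det_transpose]
    have := congrArg Matrix.det hP
    rw [Matrix.det_mul, Matrix.det_one, mul_comm] at this
    exact IsUnit.of_mul_eq_one _ this
  · rw [Matrix.inv_eq_left_inv hP]
    exact aux_phi φ w t hw ht x

/-- For h = 2, every group automorphism of ℤ^2/A_2 ℤ^2 preserving the boundary linking
form ∂λ and the boundary quadratic form ∂θ is induced, via [x] ↦ [(Pᵀ)⁻¹ x], by an isometry
P ∈ GL_2(ℤ) of A_2; i.e. the boundary map ∂ is surjective and bAut(ℤ^2, [Q_2]) is
trivial. -/
theorem boundary_map_surjective_h2 (φ : Coker 2 ≃+ Coker 2)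
    (hlink : ∀ x y x' y' : Fin 2 → ℤ, ckMk x' = φ (ckMk x) → ckMk y' = φ (ckMk y) →
      linkR 2 x' y' = linkR 2 x y)
    (hquad : ∀ x x' : Fin 2 → ℤ, ckMk x' = φ (ckMk x) → quadR 2 x' = quadR 2 x) :
    ∃ P : Matrix (Fin 2) (Fin 2) ℤ, IsUnit P.det ∧ Pᵀ * Amat 2 * P = Amat 2 ∧
      ∀ x : Fin 2 → ℤ, φ (ckMk x) = ckMk ((Pᵀ)⁻¹ *ᵥ x) := by
  obtain ⟨a, ha⟩ := Submodule.Quotient.mk_surjective _ (φ (ckMk ![1, 0]))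
  obtain ⟨b, hb⟩ := Submodule.Quotient.mk_surjective _ (φ (ckMk ![1, 1]))
  change ckMk a = _ at ha
  change ckMk b = _ at hb
  obtain ⟨n, hn⟩ := aux_quad _ _ (hquad _ _ ha)
  obtain ⟨m, hm⟩ := aux_quad _ _ (hquad _ _ hb)
  obtain ⟨w, hw, hw'⟩ := aux_rep a n (by simpa using hn)
  obtain ⟨t, ht, ht'⟩ := aux_rep b m (by simpa using hm)
  rw [hw] at ha
  rw [ht] at hb
  obtain ⟨k, hk⟩ := aux_link _ _ _ _ (hlink _ _ _ _ ha hb)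
  have key := aux_fin φ w t ha.symm hb.symm
    ((w 0 * t 1 - w 1 * t 0) • !![t 1 - w 1, -w 1; w 0 - t 0, w 0])
  rcases hw' with rfl | rfl | rfl | rfl <;> rcases ht' with rfl | rfl | rfl | rfl <;>
    first
    | (exfalso; simp at hk; omega)
    | exact key (by decide) (by decide)
end
end

section
/- For h = 5, the boundary map ∂ is surjective onto the automorphisms of the boundary forms: for every group automorphism φ of ℤ⁵/A₅ℤ⁵ satisfying ∂λ(φ(ξ),φ(η)) = ∂λ(ξ,η) and ∂θ(φ(ξ)) = ∂θ(ξ) for all ξ, η, there exists P ∈ GL₅(ℤ) with P^T A₅ P = A₅ such that φ([x]) = [(P^T)^{-1} x] for all x ∈ ℤ⁵. Equivalently, the boundary automorphism set bAut(ℤ⁵, [Q₅]) is trivial. -/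
open Matrix

noncomputable section

/-- Orthogonal coordinates (twice the `D₅*` coordinates). -/
def zc (x : Fin 5 → ℤ) : Fin 5 → ℤ :=
  ![x 0, 2 * x 1 - x 0, 2 * x 2 - x 0, 2 * x 3 - x 0, 2 * x 4 - x 0]

/-- Columns form a basis of `D₅`. -/
def Mm : Matrix (Fin 5) (Fin 5) ℤ :=
  !![2,1,1,1,1; 0,1,0,0,0; 0,0,1,0,0; 0,0,0,1,0; 0,0,0,0,1]

def AinvQ : Matrix (Fin 5) (Fin 5) ℚ :=
  !![5/8,-1/4,-1/4,-1/4,-1/4; -1/4,1/2,0,0,0; -1/4,0,1/2,0,0; -1/4,0,0,1/2,0; -1/4,0,0,0,1/2]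

theorem Amat_eq : Amat 5 = !![8,4,4,4,4; 4,4,2,2,2; 4,2,4,2,2; 4,2,2,4,2; 4,2,2,2,4] := by
  decide

theorem AmatQ_eq : AmatQ 5 = !![8,4,4,4,4; 4,4,2,2,2; 4,2,4,2,2; 4,2,2,4,2; 4,2,2,2,4] := by
  rw [AmatQ, Amat_eq]
  ext i j
  fin_cases i <;> fin_cases j <;> simp

theorem QmatQ_eq : QmatQ 5 = !![4,4,4,4,4; 0,2,2,2,2; 0,0,2,2,2; 0,0,0,2,2; 0,0,0,0,2] := by
  have : Qmat 5 = !![4,4,4,4,4; 0,2,2,2,2; 0,0,2,2,2; 0,0,0,2,2; 0,0,0,0,2] := by decide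
  rw [QmatQ, this]
  ext i j
  fin_cases i <;> fin_cases j <;> simp

theorem Ainv_eq : (AmatQ 5)⁻¹ = AinvQ := by
  apply Matrix.inv_eq_right_inv
  rw [AmatQ_eq, AinvQ]
  ext i j
  fin_cases i <;> fin_cases j <;> simp [Matrix.mul_apply, Fin.sum_univ_five] <;> norm_num

theorem circ_eq (a b : ℚ) (h : (a : AddCircle (1 : ℚ)) = b) : ∃ n : ℤ, a = b + n := by
  rw [QuotientAddGroup.eq, AddSubgroup.mem_zmultiples_iff] at h
  obtain ⟨k, hk⟩ := h
  refine ⟨-k, ?_⟩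
  simp at hk
  push_cast
  linarith

theorem link_dvd (x y x' y' : Fin 5 → ℤ) (h : linkR 5 x' y' = linkR 5 x y) :
    (8 : ℤ) ∣ ∑ k, zc x' k * zc y' k - ∑ k, zc x k * zc y k := by
  obtain ⟨n, hn⟩ := circ_eq _ _ h
  refine ⟨n, ?_⟩
  rw [Ainv_eq] at hn
  simp [AinvQ, ratVec, dotProduct, Matrix.mulVec, Fin.sum_univ_five] at hn
  simp [zc, Fin.sum_univ_five]
  have : ∀ a b : ℤ, (a : ℚ) = b → a = b := fun a b h => by exact_mod_cast h
  apply this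
  push_cast
  linear_combination 8 * hn

theorem quad_dvd (x x' : Fin 5 → ℤ) (h : quadR 5 x' = quadR 5 x) :
    (16 : ℤ) ∣ ∑ k, zc x' k * zc x' k - ∑ k, zc x k * zc x k := by
  obtain ⟨n, hn⟩ := circ_eq _ _ h
  refine ⟨n, ?_⟩
  rw [Ainv_eq, QmatQ_eq] at hn
  simp [AinvQ, ratVec, dotProduct, Matrix.mulVec, Matrix.mul_apply, Fin.sum_univ_five] at hn
  simp [zc, Fin.sum_univ_five]
  have : ∀ a b : ℤ, (a : ℚ) = b → a = b := fun a b h => by exact_mod_cast h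
  apply this
  push_cast
  linear_combination 16 * hn

theorem ck_eq (x y : Fin 5 → ℤ) (h : ∀ k, (4 : ℤ) ∣ zc x k - zc y k)
    (hs : (8 : ℤ) ∣ ∑ k, (zc x k - zc y k)) : ckMk x = ckMk y := by
  unfold ckMk
  rw [Submodule.Quotient.eq, LinearMap.mem_range]
  have h0 := h 0
  have h1 := h 1
  have h2 := h 2
  have h3 := h 3
  have h4 := h 4
  simp [zc, Fin.sum_univ_five] at h0 h1 h2 h3 h4 hs
  obtain ⟨c1, h1⟩ := h1
  obtain ⟨c2, h2⟩ := h2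
  obtain ⟨c3, h3⟩ := h3
  obtain ⟨c4, h4⟩ := h4
  obtain ⟨d, hs⟩ := hs
  refine ⟨![d - c1 - c2 - c3 - c4, c1, c2, c3, c4], ?_⟩
  rw [Amat_eq]
  ext i
  fin_cases i <;> simp [Matrix.mulVec, dotProduct, Fin.sum_univ_five] <;> omega

theorem sq_cases (y : ℤ) : (∃ a, y = 2 * a ∧ (4 : ℤ) ∣ y * y) ∨
    (∃ a, y = 2 * a + 1 ∧ (4 : ℤ) ∣ y * y - 1) := by
  rcases Int.even_or_odd' y with ⟨a, h | h⟩
  · exact Or.inl ⟨a, h, a * a, by rw [h]; ring⟩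
  · exact Or.inr ⟨a, h, a * a + a, by rw [h]; ring⟩

theorem odd_sq (x : ℤ) (h : x % 2 = 1) : (8 : ℤ) ∣ x * x - 1 := by
  obtain ⟨a, rfl⟩ : ∃ a, x = 2 * a + 1 := ⟨x / 2, by omega⟩
  obtain ⟨c, hc⟩ := Int.even_mul_succ_self a
  exact ⟨c, by linear_combination 4 * hc⟩

theorem lemA (x : Fin 5 → ℤ) (h : (16 : ℤ) ∣ ∑ k, zc x k * zc x k - 4) :
    (∃ (j : Fin 5) (s : ℤ), (s = 1 ∨ s = -1) ∧
      (∀ k, (4 : ℤ) ∣ zc x k - (if k = j then 2 * s else 0)) ∧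
      (8 : ℤ) ∣ ∑ k, (zc x k - (if k = j then 2 * s else 0))) ∨
    (∀ k, (4 : ℤ) ∣ zc x k - 2) := by
  have hev : x 0 % 2 = 0 := by
    by_contra hodd
    have h0 := odd_sq (zc x 0) (by simp [zc]; omega)
    have h1 := odd_sq (zc x 1) (by simp [zc]; omega)
    have h2 := odd_sq (zc x 2) (by simp [zc]; omega)
    have h3 := odd_sq (zc x 3) (by simp [zc]; omega)
    have h4 := odd_sq (zc x 4) (by simp [zc]; omega)
    rw [Fin.sum_univ_five] at h
    omega
  obtain ⟨y, hy⟩ : ∃ y : Fin 5 → ℤ, ∀ k, zc x k = 2 * y k := by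
    refine ⟨fun k => zc x k / 2, fun k => ?_⟩
    fin_cases k <;> simp [zc] <;> omega
  simp only [hy] at h ⊢
  have h' : (4 : ℤ) ∣ y 0 * y 0 + y 1 * y 1 + y 2 * y 2 + y 3 * y 3 + y 4 * y 4 - 1 := by
    rw [Fin.sum_univ_five] at h
    obtain ⟨c, hc⟩ := h
    exact ⟨c, by linarith⟩
  clear h hy
  have key : ∀ (j : Fin 5), (∀ k, k ≠ j → (2 : ℤ) ∣ y k) → (y j % 2 = 1) →
     (∃ (j : Fin 5) (s : ℤ), (s = 1 ∨ s = -1) ∧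
      (∀ k, (4 : ℤ) ∣ 2 * y k - (if k = j then 2 * s else 0)) ∧
      (8 : ℤ) ∣ ∑ k, (2 * y k - (if k = j then 2 * s else 0))) := by
    intro j hk hj
    have hsum : (∑ k, y k) % 2 = 1 := by
      rw [← Finset.add_sum_erase _ _ (Finset.mem_univ j)]
      have := Finset.dvd_sum (s := Finset.univ.erase j) (f := y) (a := (2:ℤ))
        (fun k hk' => hk k (Finset.ne_of_mem_erase hk'))
      omega
    obtain ⟨s, hs, hs4⟩ : ∃ s : ℤ, (s = 1 ∨ s = -1) ∧ (4 : ℤ) ∣ ∑ k, y k - s := by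
      by_cases h1 : (∑ k, y k) % 4 = 1
      · exact ⟨1, Or.inl rfl, by omega⟩
      · exact ⟨-1, Or.inr rfl, by omega⟩
    refine ⟨j, s, hs, ?_, ?_⟩
    · intro k
      split_ifs with hkj
      · subst hkj; omega
      · have := hk k hkj; omega
    · rw [Finset.sum_sub_distrib, ← Finset.mul_sum]
      simp
      omega
  rcases sq_cases (y 0) with ⟨a0, e0, q0⟩ | ⟨a0, e0, q0⟩ <;>
  rcases sq_cases (y 1) with ⟨a1, e1, q1⟩ | ⟨a1, e1, q1⟩ <;>
  rcases sq_cases (y 2) with ⟨a2, e2, q2⟩ | ⟨a2, e2, q2⟩ <;>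
  rcases sq_cases (y 3) with ⟨a3, e3, q3⟩ | ⟨a3, e3, q3⟩ <;>
  rcases sq_cases (y 4) with ⟨a4, e4, q4⟩ | ⟨a4, e4, q4⟩ <;>
  first
  | (exfalso; omega)
  | (left; refine key 0 ?_ (by omega); intro k hk; fin_cases k <;> simp at hk ⊢ <;> omega)
  | (left; refine key 1 ?_ (by omega); intro k hk; fin_cases k <;> simp at hk ⊢ <;> omega)
  | (left; refine key 2 ?_ (by omega); intro k hk; fin_cases k <;> simp at hk ⊢ <;> omega)
  | (left; refine key 3 ?_ (by omega); intro k hk; fin_cases k <;> simp at hk ⊢ <;> omega)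
  | (left; refine key 4 ?_ (by omega); intro k hk; fin_cases k <;> simp at hk ⊢ <;> omega)
  | (right; intro k; fin_cases k <;> simp <;> omega)

/-- Dot products modulo 8 of vectors known modulo 4 (with even entries). -/
theorem dot_congr (u v u' v' : Fin 5 → ℤ) (hu : ∀ k, (4 : ℤ) ∣ u k - 2 * u' k)
    (hv : ∀ k, (4 : ℤ) ∣ v k - 2 * v' k) (h : (8 : ℤ) ∣ ∑ k, u k * v k) :
    (2 : ℤ) ∣ ∑ k, u' k * v' k := by
  have : (8 : ℤ) ∣ ∑ k, (u k * v k - 4 * (u' k * v' k)) := by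
    apply Finset.dvd_sum
    intro k _
    obtain ⟨a, ha⟩ := hu k
    obtain ⟨b, hb⟩ := hv k
    have ha' : u k = 2 * u' k + 4 * a := by linarith
    have hb' : v k = 2 * v' k + 4 * b := by linarith
    rw [ha', hb']
    exact ⟨u' k * b + a * v' k + 2 * a * b, by ring⟩
  rw [Finset.sum_sub_distrib, ← Finset.mul_sum] at this
  omega

theorem zc_Mt (y : Fin 5 → ℤ) : zc (Mmᵀ *ᵥ y) = 2 • y := by
  ext k
  fin_cases k <;> simp [zc, Mm, Matrix.mulVec, dotProduct, Fin.sum_univ_five] <;> ring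

theorem Mt_zc (x : Fin 5 → ℤ) : Mmᵀ *ᵥ zc x = 2 • x := by
  ext k
  fin_cases k <;> simp [zc, Mm, Matrix.mulVec, dotProduct, Fin.sum_univ_five] <;> ring

theorem A_M : Amat 5 = 2 • (Mmᵀ * Mm) := by
  rw [Amat_eq]; decide

theorem exists_P (S : Matrix (Fin 5) (Fin 5) ℤ) (hS : Sᵀ * S = 1)
    (hodd : ∀ j, (∑ k, S k j) % 2 = 1) :
    ∃ P : Matrix (Fin 5) (Fin 5) ℤ, IsUnit P.det ∧ Pᵀ * Amat 5 * P = Amat 5 ∧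
      ∀ x, zc ((Pᵀ)⁻¹ *ᵥ x) = S *ᵥ zc x := by
  obtain ⟨P, hP⟩ : ∃ P : Matrix (Fin 5) (Fin 5) ℤ, Mm * P = S * Mm := by
    refine ⟨Matrix.of fun k j => if k = 0 then
      ((S * Mm) 0 j - (S * Mm) 1 j - (S * Mm) 2 j - (S * Mm) 3 j - (S * Mm) 4 j) / 2
      else (S * Mm) k j, ?_⟩
    have o0 := hodd 0
    have o1 := hodd 1
    have o2 := hodd 2
    have o3 := hodd 3
    have o4 := hodd 4
    rw [Fin.sum_univ_five] at o0 o1 o2 o3 o4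
    ext k j
    fin_cases k <;> fin_cases j <;>
      simp [Mm, Matrix.mul_apply, Fin.sum_univ_five] <;> omega
  have hA : Pᵀ * Amat 5 * P = Amat 5 := by
    rw [A_M]
    have : Pᵀ * (Mmᵀ * Mm) * P = Mmᵀ * Mm := by
      calc Pᵀ * (Mmᵀ * Mm) * P = (Mm * P)ᵀ * (Mm * P) := by
            rw [Matrix.transpose_mul]; simp only [Matrix.mul_assoc]
        _ = Mmᵀ * (Sᵀ * S) * Mm := by
            rw [hP, Matrix.transpose_mul]; simp only [Matrix.mul_assoc]
        _ = _ := by rw [hS, Matrix.mul_one]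
    rw [Matrix.mul_smul, Matrix.smul_mul, this]
  have hMdet : Mm.det = 2 := by
    simp [Mm, Matrix.det_succ_row_zero, Fin.sum_univ_succ]
  have hdet : IsUnit P.det := by
    have h1 := congrArg Matrix.det hP
    rw [Matrix.det_mul, Matrix.det_mul, hMdet] at h1
    have h2 : P.det = S.det := by linarith
    have h3 := congrArg Matrix.det hS
    rw [Matrix.det_mul, Matrix.det_one] at h3
    rw [h2]
    exact IsUnit.of_mul_eq_one_right _ h3
  refine ⟨P, hdet, hA, fun x => ?_⟩
  have hdt : IsUnit (Pᵀ).det := by rwa [Matrix.det_transpose]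
  have e1 : Pᵀ * (Mmᵀ * S) = Mmᵀ := by
    rw [← Matrix.mul_assoc, ← Matrix.transpose_mul, hP, Matrix.transpose_mul, Matrix.mul_assoc, hS,
      Matrix.mul_one]
  have e2 : Mmᵀ * S = (Pᵀ)⁻¹ * Mmᵀ := by
    conv_rhs => rw [← e1]
    rw [← Matrix.mul_assoc, Matrix.nonsing_inv_mul _ hdt, Matrix.one_mul]
  have e3 : Mmᵀ *ᵥ (S *ᵥ zc x) = Mmᵀ *ᵥ zc ((Pᵀ)⁻¹ *ᵥ x) := by
    rw [Matrix.mulVec_mulVec, e2, ← Matrix.mulVec_mulVec, Mt_zc, Mt_zc, Matrix.mulVec_smul]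
  have e4 := congrArg zc e3
  rw [zc_Mt, zc_Mt] at e4
  ext k
  have := congrFun e4 k
  simp at this
  exact this.symm

/-- Preimages of the standard orthogonal vectors. -/
def bv (i : Fin 5) : Fin 5 → ℤ := Mmᵀ *ᵥ Pi.single i 1

theorem zc_bv (i k : Fin 5) : zc (bv i) k = if k = i then 2 else 0 := by
  rw [bv, zc_Mt]
  simp [Pi.single_apply]

theorem zc_one : zc 1 = 1 := by
  ext k; fin_cases k <;> simp [zc]

theorem ck_surj (c : Coker 5) : ∃ x, ckMk x = c := Submodule.Quotient.mk_surjective _ c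

theorem boundary_map_surjective_h5 (φ : Coker 5 ≃+ Coker 5)
    (hlink : ∀ x y x' y' : Fin 5 → ℤ, ckMk x' = φ (ckMk x) → ckMk y' = φ (ckMk y) →
      linkR 5 x' y' = linkR 5 x y)
    (hquad : ∀ x x' : Fin 5 → ℤ, ckMk x' = φ (ckMk x) → quadR 5 x' = quadR 5 x) :
    ∃ P : Matrix (Fin 5) (Fin 5) ℤ, IsUnit P.det ∧ Pᵀ * Amat 5 * P = Amat 5 ∧
      ∀ x : Fin 5 → ℤ, φ (ckMk x) = ckMk ((Pᵀ)⁻¹ *ᵥ x) := by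
  choose X hX using fun i => ck_surj (φ (ckMk (bv i)))
  have hXX : ∀ i j, i ≠ j → (8 : ℤ) ∣ ∑ k, zc (X i) k * zc (X j) k := by
    intro i j hij
    have := link_dvd _ _ _ _ (hlink _ _ _ _ (hX i) (hX j))
    simpa [zc_bv, hij, hij.symm] using this
  have hA := fun i => lemA (X i) (by simpa [zc_bv] using quad_dvd _ _ (hquad _ _ (hX i)))
  have hB : ∀ i, ∃ (j : Fin 5) (s : ℤ), (s = 1 ∨ s = -1) ∧
      (∀ k, (4 : ℤ) ∣ zc (X i) k - (if k = j then 2 * s else 0)) ∧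
      (8 : ℤ) ∣ ∑ k, (zc (X i) k - (if k = j then 2 * s else 0)) := by
    intro i
    rcases hA i with h | h
    · exact h
    · exfalso
      have hij : i ≠ i + 1 := by fin_cases i <;> decide
      have h8 := hXX _ _ hij
      rcases hA (i + 1) with ⟨j, s, hs, h1, -⟩ | h1
      · have := dot_congr _ _ (fun _ => 1) (fun k => if k = j then s else 0) (by simpa using h)
          (by intro k; have := h1 k; simpa using this) h8
        simp at this
        omega
      · have := dot_congr _ _ (fun _ => 1) (fun _ => 1) (by simpa using h) (by simpa using h1) h8
        simp at this
  clear hA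
  choose p s hs h4 h8 using hB
  have hinj : Function.Injective p := by
    intro i j hij
    by_contra hne
    have := dot_congr _ _ (fun k => if k = p i then s i else 0) (fun k => if k = p j then s j else 0)
      (by intro k; simpa using h4 i k) (by intro k; simpa using h4 j k) (hXX i j hne)
    simp [hij] at this
    rcases hs i with h | h <;> rcases hs j with h' | h' <;> rw [h, h'] at this <;> omega
  have hsurj : Function.Surjective p := Finite.surjective_of_injective hinj
  have hss : ∀ i, s i * s i = 1 := by
    intro i; rcases hs i with h | h <;> rw [h] <;> norm_num
  let S : Matrix (Fin 5) (Fin 5) ℤ := Matrix.of fun k i => if k = p i then s i else 0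
  have hSo : Sᵀ * S = 1 := by
    ext i j
    by_cases hij : i = j
    · subst hij
      simp [S, Matrix.mul_apply, hss]
    · have : p j ≠ p i := fun h => hij (hinj h).symm
      simp [S, Matrix.mul_apply, hij, this]
  obtain ⟨P, hu, hPA, hz⟩ := exists_P S hSo (by
    intro j
    simp [S]
    rcases hs j with h | h <;> rw [h] <;> norm_num)
  refine ⟨P, hu, hPA, ?_⟩
  have hzb : ∀ i k, zc ((Pᵀ)⁻¹ *ᵥ bv i) k = if k = p i then 2 * s i else 0 := by
    intro i k
    rw [hz]
    simp [Matrix.mulVec, dotProduct, zc_bv, S, mul_comm]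
  have hb : ∀ i, φ (ckMk (bv i)) = ckMk ((Pᵀ)⁻¹ *ᵥ bv i) := by
    intro i
    rw [← hX i]
    apply ck_eq
    · intro k; rw [hzb]; exact h4 i k
    · simp only [hzb]; exact h8 i
  have hz1 : ∀ i, zc ((Pᵀ)⁻¹ *ᵥ 1) (p i) = s i := by
    intro i
    rw [hz, zc_one]
    simp [Matrix.mulVec, dotProduct, S, hinj.eq_iff]
  have h1 : φ (ckMk 1) = ckMk ((Pᵀ)⁻¹ *ᵥ 1) := by
    obtain ⟨y, hy⟩ := ck_surj (φ (ckMk 1))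
    rw [← hy]
    have hq := quad_dvd _ _ (hquad _ _ hy)
    have hl := fun i => link_dvd _ _ _ _ (hlink _ _ _ _ hy (hb i).symm)
    generalize hw : zc ((Pᵀ)⁻¹ *ᵥ 1) = w at hz1
    have hww : ∀ k, w k = 1 ∨ w k = -1 := by
      intro k; obtain ⟨i, rfl⟩ := hsurj k; rw [hz1]; exact hs i
    have hd : ∀ k, (4 : ℤ) ∣ zc y k - w k := by
      intro k
      obtain ⟨i, rfl⟩ := hsurj k
      have := hl i
      simp [hzb, zc_bv, zc_one] at this
      rw [hz1]
      rcases hs i with h | h <;> rw [h] at this ⊢ <;> omega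
    apply ck_eq
    · rw [hw]; exact hd
    · rw [hw]
      choose u hu using hd
      have e : ∀ k, zc y k * zc y k - 1 = 8 * u k + 16 * ((zc y k * zc y k - 1 - 8 * u k) / 16) := by
        intro k
        have hk : zc y k = w k + 4 * u k := by linarith [hu k]
        have : (16 : ℤ) ∣ zc y k * zc y k - 1 - 8 * u k := by
          rw [hk]
          rcases hww k with h | h <;> rw [h]
          · exact ⟨u k * u k, by ring⟩
          · exact ⟨u k * u k - u k, by ring⟩
        omega
      simp only [zc_one, Fin.sum_univ_five, Pi.one_apply] at hq ⊢
      have e0 := e 0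
      have e1 := e 1
      have e2 := e 2
      have e3 := e 3
      have e4 := e 4
      rw [hu 0, hu 1, hu 2, hu 3, hu 4]
      omega
  intro x
  let f : (Fin 5 → ℤ) →+ Coker 5 :=
    φ.toAddMonoidHom.comp (Submodule.mkQ (LinearMap.range ((Amat 5).mulVecLin))).toAddMonoidHom
  let g : (Fin 5 → ℤ) →+ Coker 5 :=
    (Submodule.mkQ (LinearMap.range ((Amat 5).mulVecLin))).toAddMonoidHom.comp
      ((Pᵀ)⁻¹).mulVecLin.toAddMonoidHom
  have fb : ∀ i, f (bv i) = g (bv i) := hb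
  have f1 : f 1 = g 1 := h1
  have hx : x = x 0 • (1 : Fin 5 → ℤ) + (x 1 - x 0) • bv 1 + (x 2 - x 0) • bv 2
      + (x 3 - x 0) • bv 3 + (x 4 - x 0) • bv 4 := by
    ext k
    fin_cases k <;> simp [bv, Mm, vecHead, vecTail]
  have : f x = g x := by
    rw [hx]
    simp only [map_add, map_zsmul, fb, f1]
  exact this
end
end
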